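/- Let (X_n)_{n≥0} be real random variables on (M,𝓕,μ) with ‖X_n‖_∞ ≤ L and μ(X_n) = 0 for all n, satisfying: (i) for every N ≥ 1 the sequence (X_n)_{0≤n<N} satisfies the functional correlation bound with constant C_* and nonincreasing rate function R with ∑_{n=1}^∞ nR(n) < ∞ and ∑_{n=1}^∞ R(n)^{1/2} < ∞; (ii) B_N^{−1} = o(N^{−2/3}) as N → ∞; (iii) there exist C₁ > 0, N₀ ≥ 1 and M_N ≥ 1 with M_N = o(B_N) such that for N ≥ N₀, B_v^{(N)} − B_u^{(N)} ≥ C₁M_N whenever 0 ≤ u < v < N and v − u ≥ M_N. Then for every λ > 0 there exists a constant C_λ > 0 (independent of ε) such that for all sufficiently large N and all ε ∈ (1/K_N, 1), where K_N = ⌊B_N/M_N⌋, one has μ(‖(W_N)_ε − W_N‖_∞ ≥ λ) ≤ C_λ(M_N/B_N + ε). In particular, for every λ > 0, limsup_{ε→0} limsup_{N→∞} μ(‖(W_N)_ε − W_N‖_∞ ≥ λ) = 0. -/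

import Mathlib

set_option autoImplicit false

open MeasureTheory Filter
open scoped ENNReal NNReal Topology

noncomputable section

/-- The cube `[-L,L]^n`. -/
def cube (L : ℝ) (n : ℕ) : Set (Fin n → ℝ) := {x | ∀ j, |x j| ≤ L}

/-- `F : [-L,L]^n → ℝ` is separately Lipschitz, with `Fb` a bound for `sup |F|` on the cube
and `Fl` a bound for the maximal Lipschitz constant `[F]₁` in any single coordinate
(so that `Fb + Fl` is a bound for `‖F‖_Lip = ‖F‖_∞ + [F]₁`). -/
structure SepLipBound (L : ℝ) {n : ℕ} (F : (Fin n → ℝ) → ℝ) (Fb Fl : ℝ) : Prop where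
  bound : ∀ x ∈ cube L n, |F x| ≤ Fb
  lip : ∀ (j : Fin n), ∀ x ∈ cube L n, ∀ a b : ℝ, |a| ≤ L → |b| ≤ L →
    |F (Function.update x j a) - F (Function.update x j b)| ≤ Fl * |a - b|

/-- The functional correlation bound (FCB) for `(X_n)_{0 ≤ n < N}` with rate function `R` and
constant `Cs`: for every finite ordered index set `i 0 < i 1 < ⋯ < i (n-1)` inside `[0, N)`,
split at position `p` into two blocks, and every separately Lipschitz
`F : [-L,L]^n → ℝ`, the correlation between the two blocks is at most
`Cs ‖F‖_Lip R(g₁)` where `g₁ = i p − i (p−1)` is the gap between the blocks. -/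
def FCB {M : Type*} [MeasurableSpace M] (μ : MeasureTheory.Measure M)
    (X : ℕ → M → ℝ) (N : ℕ) (L Cs : ℝ) (R : ℕ → ℝ) : Prop :=
  ∀ (n : ℕ) (i : ℕ → ℕ), StrictMono i → (∀ j < n, i j < N) →
  ∀ p : ℕ, 0 < p → p < n →
  ∀ (F : (Fin n → ℝ) → ℝ) (Fb Fl : ℝ), SepLipBound L F Fb Fl →
    |(∫ x, F (fun j => X (i j) x) ∂μ) -
      ∫ x, ∫ y, F (fun j => if (j : ℕ) < p then X (i j) x else X (i j) y) ∂μ ∂μ|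
    ≤ Cs * (Fb + Fl) * R (i p - i (p - 1))

/-- The covariance `σ_{i,j} = μ(X_i X_j)`. -/
def sigmaCov {M : Type*} [MeasurableSpace M] (μ : Measure M) (X : ℕ → M → ℝ) (i j : ℕ) : ℝ :=
  ∫ x, X i x * X j x ∂μ

/-- `B_u^{(N)} = ∑_{i<u} ∑_{j<N} μ(X_i X_j)`. -/
def Bpart {M : Type*} [MeasurableSpace M] (μ : Measure M) (X : ℕ → M → ℝ) (N u : ℕ) : ℝ :=
  ∑ i ∈ Finset.range u, ∑ j ∈ Finset.range N, sigmaCov μ X i j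

/-- `B_N = B_N^{(N)}`. -/
def Bvar {M : Type*} [MeasurableSpace M] (μ : Measure M) (X : ℕ → M → ℝ) (N : ℕ) : ℝ :=
  Bpart μ X N N

/-- `W_N(t) = B_N^{-1/2} ∑_{n<N} θ_n^{(N)}(t) X_n` where `θ_n^{(N)}(t) = 1_{t ≥ B_n^{(N)}/B_N}`. -/
def WNval {M : Type*} [MeasurableSpace M] (μ : Measure M) (X : ℕ → M → ℝ) (N : ℕ)
    (t : ℝ) (x : M) : ℝ :=
  (Bvar μ X N) ^ (-(1:ℝ)/2) *
    ∑ n ∈ Finset.range N, (if Bpart μ X N n / Bvar μ X N ≤ t then (1:ℝ) else 0) * X n x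

/-- Clamping of a time point to `[0,1]` (realizing the convention `w(t) = w(0)` for `t < 0`
and `w(t) = w(1)` for `t > 1`). -/
def clamp (r : ℝ) : ℝ := max 0 (min 1 r)

/-- The smoothed process `(W_N)_ε(s) = ∫₀¹ W_N(s + εu) du`. -/
def WNsmooth {M : Type*} [MeasurableSpace M] (μ : Measure M) (X : ℕ → M → ℝ) (N : ℕ)
    (ε : ℝ) (s : ℝ) (x : M) : ℝ :=
  ∫ u in (0:ℝ)..1, WNval μ X N (clamp (s + ε * u)) x

/-- `‖(W_N)_ε − W_N‖_∞` at the sample point `x`. -/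
def smoothDist {M : Type*} [MeasurableSpace M] (μ : Measure M) (X : ℕ → M → ℝ) (N : ℕ)
    (ε : ℝ) (x : M) : ℝ :=
  ⨆ t : Set.Icc (0:ℝ) 1, |WNsmooth μ X N ε (t : ℝ) x - WNval μ X N (t : ℝ) x|

/-!
The functional correlation bound, applied to products of at most four of the `X_n`, bounds the
fourth moment of `∑_{i ∈ A} X_i` by `K |A|²` for every finite set `A` of indices, whatever its
shape. As `B_n^{(N)}` need not be monotone in `n`, the process `W_N` becomes a partial sum process
only once the indices are sorted by `B_n^{(N)}`; this is harmless, because the moment bound ignores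
the order of the indices. Dyadic chaining then shows that some sum over at most `q` consecutive
sorted indices exceeds `c` with probability `O(K q (N + q) / c⁴)`. By the variance growth condition
a time window of length `ε` holds `q = O(ε B_N)` indices, and `N = O(B_N)`. Smoothing at scale `ε`
averages `W_N` over such a window, so that `c` is of order `λ √B_N` and the probability is `O(ε)`.
-/

section ListProducts

variable {ι α : Type*} [SeminormedRing α] [NormOneClass α] {f g : ι → α} {C : ℝ}

lemma norm_list_prod_map_le (hf : ∀ q, ‖f q‖ ≤ C) (qs : List ι) :
    ‖(qs.map f).prod‖ ≤ C ^ qs.length := by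
  induction qs with
  | nil => simp
  | cons q qs ih =>
    rw [List.map_cons, List.prod_cons, List.length_cons, pow_succ']
    exact norm_mul_le_of_le (hf q) ih

lemma norm_list_prod_map_sub_le {d : ℝ} (hC : 1 ≤ C) (hf : ∀ q, ‖f q‖ ≤ C)
    (hg : ∀ q, ‖g q‖ ≤ C) (hfg : ∀ q, ‖f q - g q‖ ≤ d) (qs : List ι) :
    ‖(qs.map f).prod - (qs.map g).prod‖ ≤ qs.length * C ^ qs.length * d := by
  induction qs with
  | nil => simp
  | cons q qs ih =>
    have hd : 0 ≤ d := (norm_nonneg _).trans (hfg q)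
    have telescope : f q * (qs.map f).prod - g q * (qs.map g).prod
        = (f q - g q) * (qs.map f).prod + g q * ((qs.map f).prod - (qs.map g).prod) := by
      noncomm_ring
    rw [List.map_cons, List.prod_cons, List.map_cons, List.prod_cons, telescope, List.length_cons]
    calc _ ≤ d * C ^ qs.length + C * (qs.length * C ^ qs.length * d) :=
          norm_add_le_of_le (norm_mul_le_of_le (hfg q) (norm_list_prod_map_le hf qs))
            (norm_mul_le_of_le (hg q) ih)
      _ ≤ d * C ^ (qs.length + 1) + C * (qs.length * C ^ qs.length * d) := by
          gcongr
          exact Nat.le_succ _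
      _ = _ := by push_cast; ring

end ListProducts

lemma update_mem_cube {L : ℝ} {n : ℕ} {x : Fin n → ℝ} (hx : x ∈ cube L n) (j : Fin n) {a : ℝ}
    (ha : |a| ≤ L) : Function.update x j a ∈ cube L n := by
  intro k
  rcases eq_or_ne k j with rfl | hkj
  · simpa using ha
  · simpa [hkj] using hx k

lemma sepLipBound_list_prod (L : ℝ) {n : ℕ} (qs : List (Fin n)) :
    SepLipBound L (fun x => (qs.map x).prod)
      (max L 1 ^ qs.length) (qs.length * max L 1 ^ qs.length) := by
  have norm_le {x : Fin n → ℝ} (hx : x ∈ cube L n) (q : Fin n) : ‖x q‖ ≤ max L 1 :=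
    (hx q).trans (le_max_left L 1)
  refine ⟨fun x hx => norm_list_prod_map_le (norm_le hx) qs, fun j x hx a b ha hb => ?_⟩
  refine norm_list_prod_map_sub_le (le_max_right L 1) (norm_le (update_mem_cube hx j ha))
    (norm_le (update_mem_cube hx j hb)) (fun q => ?_) qs
  rcases eq_or_ne q j with rfl | hqj
  · simp
  · simp [hqj]

/-- Products of at most four of the variables `X n`, split across a gap of length `g`, have
covariance at most `ρ g`. The gap `0` is allowed, where `ρ 0` merely bounds the covariances. -/
def ProductDecorrelation {M : Type*} [MeasurableSpace M] (μ : Measure M) (X : ℕ → M → ℝ)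
    (ρ : ℕ → ℝ) : Prop :=
  ∀ (a b : ℕ) (ls rs : List ℕ), a ≤ b → (∀ l ∈ ls, l ≤ a) → (∀ r ∈ rs, b ≤ r) →
    ls.length + rs.length ≤ 4 →
    |(∫ x, (ls.map (X · x)).prod * (rs.map (X · x)).prod ∂μ) -
      (∫ x, (ls.map (X · x)).prod ∂μ) * ∫ x, (rs.map (X · x)).prod ∂μ| ≤ ρ (b - a)

/-- The increasing enumeration of `ℕ` with the open interval `(a, b)` removed. -/
def skipGap (a b q : ℕ) : ℕ := if q ≤ a then q else q + (b - a - 1)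

lemma strictMono_skipGap (a b : ℕ) : StrictMono (skipGap a b) := by
  intro p q hpq
  simp only [skipGap]
  split_ifs <;> omega

lemma skipGap_of_le {a b q : ℕ} (hq : q ≤ a) : skipGap a b q = q := if_pos hq

lemma skipGap_sub {a b r : ℕ} (hab : a < b) (hr : b ≤ r) : skipGap a b (r - (b - a - 1)) = r := by
  rw [skipGap, if_neg (by omega)]
  omega

lemma skipGap_succ_sub {a b : ℕ} (hab : a < b) : skipGap a b (a + 1) - skipGap a b a = b - a := by
  simp only [skipGap]
  split_ifs <;> omega

/-- The decorrelation rate that the functional correlation bound gives for products of at most four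
variables; the extra mass at `0` accounts for the covariances of products without a gap. -/
def fcbRate (L Cs : ℝ) (R : ℕ → ℝ) (n : ℕ) : ℝ :=
  5 * max L 1 ^ 4 * (|Cs| * |R n| + if n = 0 then 1 else 0)

section FunctionalCorrelationBound

variable {M : Type*} [MeasurableSpace M] {μ : Measure M} {X : ℕ → M → ℝ} {L Cs : ℝ} {R : ℕ → ℝ}

lemma abs_cov_list_prod_le_of_fcb (hfcb : ∀ N, FCB μ X N L Cs R) {a b : ℕ} (hab : a < b)
    {ls rs : List ℕ} (hls : ∀ l ∈ ls, l ≤ a) (hrs : ∀ r ∈ rs, b ≤ r) :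
    |(∫ x, (ls.map (X · x)).prod * (rs.map (X · x)).prod ∂μ) -
      (∫ x, (ls.map (X · x)).prod ∂μ) * ∫ x, (rs.map (X · x)).prod ∂μ| ≤
    Cs * (max L 1 ^ (ls.length + rs.length) +
      (ls.length + rs.length : ℕ) * max L 1 ^ (ls.length + rs.length)) * R (b - a) := by
  -- In the enumeration of `ℕ` without the gap, `r ∈ rs` has position `pos r`.
  let pos : ℕ → ℕ := fun r => r - (b - a - 1)
  let k := a + 1 + rs.sum
  have hleft : ∀ l ∈ ls, (Fin.ofNat (k + 1) l : ℕ) = l ∧ l < a + 1 ∧ skipGap a b l = l := by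
    intro l hl
    have hla := hls l hl
    exact ⟨Nat.mod_eq_of_lt (by omega), by omega, skipGap_of_le hla⟩
  have hright : ∀ r ∈ rs,
      (Fin.ofNat (k + 1) (pos r) : ℕ) = pos r ∧ ¬ pos r < a + 1 ∧ skipGap a b (pos r) = r := by
    intro r hr
    have hbr := hrs r hr
    have hsum := List.le_sum_of_mem hr
    simp only [pos]
    exact ⟨Nat.mod_eq_of_lt (by omega), by omega, skipGap_sub hab hbr⟩
  have eval_left {y : Fin (k + 1) → ℝ} {x : M}
      (hy : ∀ j : Fin (k + 1), (j : ℕ) < a + 1 → y j = X (skipGap a b j) x) :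
      ((ls.map (Fin.ofNat (k + 1))).map y) = ls.map (X · x) := by
    rw [List.map_map]
    refine List.map_congr_left fun l hl => ?_
    obtain ⟨hval, hlt, hskip⟩ := hleft l hl
    rw [Function.comp_apply, hy _ (by rwa [hval]), hval, hskip]
  have eval_right {y : Fin (k + 1) → ℝ} {x : M}
      (hy : ∀ j : Fin (k + 1), ¬ (j : ℕ) < a + 1 → y j = X (skipGap a b j) x) :
      ((rs.map (Fin.ofNat (k + 1) ∘ pos)).map y) = rs.map (X · x) := by
    rw [List.map_map]
    refine List.map_congr_left fun r hr => ?_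
    obtain ⟨hval, hlt, hskip⟩ := hright r hr
    rw [Function.comp_apply, Function.comp_apply, hy _ (by rwa [hval]), hval, hskip]
  have key := hfcb (skipGap a b (k + 1)) (k + 1) _ (strictMono_skipGap a b)
    (fun _ hj => strictMono_skipGap a b hj) (a + 1) (by omega) (by omega) _ _ _
    (sepLipBound_list_prod L (ls.map (Fin.ofNat (k + 1)) ++ rs.map (Fin.ofNat (k + 1) ∘ pos)))
  simp only [Nat.add_sub_cancel, skipGap_succ_sub hab, List.map_append, List.prod_append,
    List.length_append, List.length_map] at key
  have joint (x : M) := congrArg₂ (fun s t : List ℝ => s.prod * t.prod)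
    (eval_left (y := fun j => X (skipGap a b j) x) (x := x) fun _ _ => rfl)
    (eval_right (y := fun j => X (skipGap a b j) x) (x := x) fun _ _ => rfl)
  have split (x y : M) := congrArg₂ (fun s t : List ℝ => s.prod * t.prod)
    (eval_left (x := x) (y := fun j =>
      if (j : ℕ) < a + 1 then X (skipGap a b j) x else X (skipGap a b j) y) fun _ h => if_pos h)
    (eval_right (x := y) (y := fun j =>
      if (j : ℕ) < a + 1 then X (skipGap a b j) x else X (skipGap a b j) y) fun _ h => if_neg h)
  simp only at joint split
  simpa only [joint, split, integral_const_mul, integral_mul_const] using key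

lemma abs_cov_list_prod_le_of_bdd [IsProbabilityMeasure μ] {C : ℝ} (hC : 0 ≤ C)
    (hbdd : ∀ n x, |X n x| ≤ C) (ls rs : List ℕ) :
    |(∫ x, (ls.map (X · x)).prod * (rs.map (X · x)).prod ∂μ) -
      (∫ x, (ls.map (X · x)).prod ∂μ) * ∫ x, (rs.map (X · x)).prod ∂μ| ≤
    2 * C ^ (ls.length + rs.length) := by
  have abs_prod_le (qs : List ℕ) (x : M) : |(qs.map (X · x)).prod| ≤ C ^ qs.length :=
    norm_list_prod_map_le (f := (X · x)) (hbdd · x) qs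
  have abs_integral_le {F : M → ℝ} {B : ℝ} (hF : ∀ x, |F x| ≤ B) : |∫ x, F x ∂μ| ≤ B := by
    simpa using norm_integral_le_of_norm_le_const (μ := μ) (f := F) (ae_of_all μ hF)
  have joint : |∫ x, (ls.map (X · x)).prod * (rs.map (X · x)).prod ∂μ| ≤
      C ^ (ls.length + rs.length) := by
    refine abs_integral_le fun x => ?_
    rw [abs_mul, pow_add]
    exact mul_le_mul (abs_prod_le ls x) (abs_prod_le rs x) (abs_nonneg _) (by positivity)
  have split : |(∫ x, (ls.map (X · x)).prod ∂μ) * ∫ x, (rs.map (X · x)).prod ∂μ| ≤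
      C ^ (ls.length + rs.length) := by
    rw [abs_mul, pow_add]
    exact mul_le_mul (abs_integral_le (abs_prod_le ls)) (abs_integral_le (abs_prod_le rs))
      (abs_nonneg _) (by positivity)
  rw [two_mul]
  exact (abs_sub _ _).trans (add_le_add joint split)

lemma productDecorrelation_of_fcb [IsProbabilityMeasure μ] (hbdd : ∀ n x, |X n x| ≤ L)
    (hfcb : ∀ N, FCB μ X N L Cs R) : ProductDecorrelation μ X (fcbRate L Cs R) := by
  intro a b ls rs hab hls hrs hlen
  set C := max L 1
  have hC : 1 ≤ C := le_max_right L 1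
  have hpow : C ^ (ls.length + rs.length) ≤ C ^ 4 := pow_le_pow_right₀ hC hlen
  rcases hab.eq_or_lt with rfl | hab
  · have hR : 0 ≤ 5 * C ^ 4 * (|Cs| * |R 0|) := by positivity
    have hrate : fcbRate L Cs R (a - a) = 5 * C ^ 4 * (|Cs| * |R 0|) + 5 * C ^ 4 := by
      simp [fcbRate, mul_add, C]
    rw [hrate]
    refine (abs_cov_list_prod_le_of_bdd (zero_le_one.trans hC)
      (fun n x => (hbdd n x).trans (le_max_left L 1)) ls rs).trans ?_
    linarith [show 0 ≤ C ^ 4 by positivity]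
  · have hk : ((ls.length + rs.length : ℕ) : ℝ) ≤ 4 := by exact_mod_cast hlen
    have hite : (0 : ℝ) ≤ if b - a = 0 then 1 else 0 := by split_ifs <;> norm_num
    calc _ ≤ _ := abs_cov_list_prod_le_of_fcb hfcb hab hls hrs
      _ ≤ |Cs * R (b - a)| * (C ^ (ls.length + rs.length) +
            (ls.length + rs.length : ℕ) * C ^ (ls.length + rs.length)) := by
          rw [mul_right_comm]
          gcongr
          exact le_abs_self _
      _ ≤ |Cs * R (b - a)| * (C ^ 4 + 4 * C ^ 4) := by gcongr
      _ = 5 * C ^ 4 * (|Cs| * |R (b - a)|) := by rw [abs_mul]; ring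
      _ ≤ fcbRate L Cs R (b - a) := by
          unfold fcbRate
          gcongr
          exact le_add_of_nonneg_right hite

lemma summable_mul_fcbRate (L Cs : ℝ) (hR : Summable fun n : ℕ => (n : ℝ) * R n) :
    Summable fun n : ℕ => (n : ℝ) * fcbRate L Cs R n := by
  refine (hR.abs.mul_left (5 * max L 1 ^ 4 * |Cs|)).congr fun n => ?_
  rcases eq_or_ne n 0 with rfl | hn
  · simp
  · rw [fcbRate, if_neg hn, abs_mul, Nat.abs_cast]
    ring

end FunctionalCorrelationBound

/-- The rate at the gap between `a` and `b`, counted only if the gap between `b` and `c` is not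
larger. -/
def dominantGap (ρ : ℕ → ℝ) (a b c : ℕ) : ℝ :=
  if Nat.dist b c ≤ Nat.dist a b then ρ (Nat.dist a b) else 0

lemma dominantGap_nonneg {ρ : ℕ → ℝ} (hρ : ∀ n, 0 ≤ ρ n) (a b c : ℕ) :
    0 ≤ dominantGap ρ a b c := by
  unfold dominantGap
  split_ifs
  exacts [hρ _, le_rfl]

/-- A bound for the fourth mixed moment of centred variables with decorrelation rate `ρ` at ordered
indices `i ≤ j ≤ k ≤ l`: the product of two covariances plus the rate at the largest gap. -/
def fourPointBound (ρ : ℕ → ℝ) (i j k l : ℕ) : ℝ :=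
  ρ (Nat.dist i j) * ρ (Nat.dist k l) +
    (dominantGap ρ i j k + dominantGap ρ k j i + dominantGap ρ l k j)

lemma fourPointBound_nonneg {ρ : ℕ → ℝ} (hρ : ∀ n, 0 ≤ ρ n) (i j k l : ℕ) :
    0 ≤ fourPointBound ρ i j k l :=
  add_nonneg (mul_nonneg (hρ _) (hρ _)) (add_nonneg
    (add_nonneg (dominantGap_nonneg hρ _ _ _) (dominantGap_nonneg hρ _ _ _))
    (dominantGap_nonneg hρ _ _ _))

namespace ProductDecorrelation

variable {M : Type*} [MeasurableSpace M] {μ : Measure M} {X : ℕ → M → ℝ} {ρ : ℕ → ℝ}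

lemma rate_nonneg (h : ProductDecorrelation μ X ρ) (n : ℕ) : 0 ≤ ρ n := by
  simpa using (abs_nonneg _).trans (h 0 n [] [] n.zero_le (by simp) (by simp) (by simp))

lemma abs_sigmaCov_le (h : ProductDecorrelation μ X ρ) (hcent : ∀ n, ∫ x, X n x ∂μ = 0)
    (i j : ℕ) : |sigmaCov μ X i j| ≤ ρ (Nat.dist i j) := by
  wlog hij : i ≤ j generalizing i j
  · have hji := this j i (le_of_not_ge hij)
    rw [Nat.dist_comm]
    simpa only [sigmaCov, mul_comm] using hji
  · simpa [sigmaCov, hcent, Nat.dist_eq_sub_of_le hij] using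
      h i j [i] [j] hij (by simp) (by simp) (by simp)

-- Split the four indices at the largest of their three gaps.
lemma abs_integral_mul_mul_mul_le (h : ProductDecorrelation μ X ρ)
    (hcent : ∀ n, ∫ x, X n x ∂μ = 0) {i j k l : ℕ} (hij : i ≤ j) (hjk : j ≤ k) (hkl : k ≤ l) :
    |∫ x, X i x * X j x * X k x * X l x ∂μ| ≤ fourPointBound ρ i j k l := by
  rw [fourPointBound]
  have hpair : 0 ≤ ρ (Nat.dist i j) * ρ (Nat.dist k l) :=
    mul_nonneg (h.rate_nonneg _) (h.rate_nonneg _)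
  have hfirst := dominantGap_nonneg h.rate_nonneg i j k
  have hmiddle := dominantGap_nonneg h.rate_nonneg k j i
  have hlast := dominantGap_nonneg h.rate_nonneg l k j
  have dist_ij := Nat.dist_eq_sub_of_le hij
  have dist_jk := Nat.dist_eq_sub_of_le hjk
  have dist_ji := Nat.dist_eq_sub_of_le_right hij
  have dist_kj := Nat.dist_eq_sub_of_le_right hjk
  have dist_lk := Nat.dist_eq_sub_of_le_right hkl
  rcases le_or_gt (k - j) (j - i) with hji | hji
  · have split := h i j [i] [j, k, l] hij (by simp) (by simp; omega) (by simp)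
    have rate : dominantGap ρ i j k = ρ (j - i) := by
      rw [dominantGap, dist_ij, dist_jk, if_pos hji]
    simp only [List.map_cons, List.map_nil, List.prod_cons, List.prod_nil, mul_one, hcent,
      zero_mul, sub_zero, ← mul_assoc] at split
    linarith
  rcases le_or_gt (k - j) (l - k) with hlk | _
  · have split := h k l [i, j, k] [l] hkl (by simp; omega) (by simp) (by simp)
    have rate : dominantGap ρ l k j = ρ (l - k) := by
      rw [dominantGap, dist_lk, dist_kj, if_pos hlk]
    simp only [List.map_cons, List.map_nil, List.prod_cons, List.prod_nil, mul_one, hcent,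
      mul_zero, sub_zero, ← mul_assoc] at split
    linarith
  · have split := h j k [i, j] [k, l] hjk (by simp; omega) (by simp; omega) (by simp)
    have rate : dominantGap ρ k j i = ρ (k - j) := by
      rw [dominantGap, dist_kj, dist_ji, if_pos hji.le]
    have covs : |sigmaCov μ X i j * sigmaCov μ X k l| ≤ ρ (Nat.dist i j) * ρ (Nat.dist k l) := by
      rw [abs_mul]
      exact mul_le_mul (h.abs_sigmaCov_le hcent i j) (h.abs_sigmaCov_le hcent k l)
        (abs_nonneg _) (h.rate_nonneg _)
    simp only [List.map_cons, List.map_nil, List.prod_cons, List.prod_nil, mul_one,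
      ← mul_assoc] at split
    have triangle := abs_sub_abs_le_abs_sub (∫ x, X i x * X j x * X k x * X l x ∂μ)
      (sigmaCov μ X i j * sigmaCov μ X k l)
    unfold sigmaCov at covs triangle
    linarith

end ProductDecorrelation

/-- A bound, uniform in `a` and the finite set `A`, for `∑ b ∈ A, ρ |a - b|` which also leaves room
for the number of indices at distance at most `|a - b|` from `b`. -/
def rateMass (ρ : ℕ → ℝ) : ℝ := 2 * ∑' n : ℕ, (2 * n + 1) * ρ n

section RateSums

variable {ρ : ℕ → ℝ}

lemma sum_dist_le (hρ : ∀ n, 0 ≤ ρ n) (hs : Summable ρ) (A : Finset ℕ) (a : ℕ) :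
    ∑ b ∈ A, ρ (Nat.dist a b) ≤ 2 * ∑' n, ρ n := by
  have sum_le_tsum {B : Finset ℕ} (hB : Set.InjOn (Nat.dist a) B) :
      ∑ b ∈ B, ρ (Nat.dist a b) ≤ ∑' n, ρ n := by
    rw [← Finset.sum_image (f := ρ) hB]
    exact hs.sum_le_tsum _ fun n _ => hρ n
  rw [← Finset.sum_filter_add_sum_filter_not A (a ≤ ·), two_mul]
  refine add_le_add (sum_le_tsum ?_) (sum_le_tsum ?_) <;>
  · intro x hx y hy hxy
    simp only [Finset.coe_filter, Set.mem_ofPred_eq, Nat.dist] at hx hy hxy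
    omega

lemma rateMass_nonneg (hρ : ∀ n, 0 ≤ ρ n) : 0 ≤ rateMass ρ :=
  mul_nonneg zero_le_two (tsum_nonneg fun n => mul_nonneg (by positivity) (hρ n))

lemma summable_two_mul_add_one_mul (hs : Summable fun n : ℕ => (n : ℝ) * ρ n) :
    Summable fun n : ℕ => (2 * (n : ℝ) + 1) * ρ n := by
  refine Summable.of_norm_bounded_eventually_nat (hs.norm.mul_left 3) ?_
  filter_upwards [eventually_ge_atTop 1] with n hn
  have hn' : (1 : ℝ) ≤ n := by exact_mod_cast hn
  have hlin : ‖2 * (n : ℝ) + 1‖ ≤ 3 * ‖(n : ℝ)‖ := by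
    rw [Real.norm_of_nonneg (by positivity), Real.norm_of_nonneg (by positivity)]
    linarith
  rw [norm_mul, norm_mul, ← mul_assoc]
  gcongr

variable (hρ : ∀ n, 0 ≤ ρ n) (hs : Summable fun n : ℕ => (n : ℝ) * ρ n)
include hρ hs

lemma sum_two_mul_dist_add_one_mul_le (A : Finset ℕ) (a : ℕ) :
    ∑ b ∈ A, (2 * (Nat.dist a b : ℝ) + 1) * ρ (Nat.dist a b) ≤ rateMass ρ :=
  sum_dist_le (fun n => mul_nonneg (by positivity) (hρ n)) (summable_two_mul_add_one_mul hs) A a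

lemma sum_rate_dist_le (A : Finset ℕ) (a : ℕ) :
    ∑ b ∈ A, ρ (Nat.dist a b) ≤ rateMass ρ := by
  refine (Finset.sum_le_sum fun b _ => ?_).trans (sum_two_mul_dist_add_one_mul_le hρ hs A a)
  exact le_mul_of_one_le_left (hρ _) (le_add_of_nonneg_left (by positivity))

lemma sum_sum_rate_dist_le (A : Finset ℕ) :
    ∑ a ∈ A, ∑ b ∈ A, ρ (Nat.dist a b) ≤ A.card * rateMass ρ := by
  rw [← nsmul_eq_mul]
  exact Finset.sum_le_card_nsmul _ _ _ fun a _ => sum_rate_dist_le hρ hs A a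

lemma sum_dominantGap_le (A : Finset ℕ) :
    ∑ a ∈ A, ∑ b ∈ A, ∑ c ∈ A, dominantGap ρ a b c ≤ A.card * rateMass ρ := by
  rw [← nsmul_eq_mul]
  refine Finset.sum_le_card_nsmul _ _ _ fun a _ => ?_
  refine (Finset.sum_le_sum fun b _ => ?_).trans (sum_two_mul_dist_add_one_mul_le hρ hs A a)
  set d := Nat.dist a b
  have hcard : (A.filter (Nat.dist b · ≤ d)).card ≤ 2 * d + 1 := by
    calc _ ≤ (Finset.Icc (b - d) (b + d)).card := by
          refine Finset.card_le_card fun c hc => ?_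
          have hbc : b - c + (c - b) ≤ d := (Finset.mem_filter.1 hc).2
          rw [Finset.mem_Icc]
          omega
      _ ≤ 2 * d + 1 := by rw [Nat.card_Icc]; omega
  simp only [dominantGap]
  rw [← Finset.sum_filter, Finset.sum_const, nsmul_eq_mul]
  exact mul_le_mul_of_nonneg_right (by exact_mod_cast hcard) (hρ _)

end RateSums

section PiFinsetSums

variable {ι α β : Type*} [Fintype ι] [DecidableEq ι]

lemma sum_piFinset_comp_perm [AddCommMonoid β] (A : Finset α) (g : (ι → α) → β)
    (σ : Equiv.Perm ι) :
    ∑ f ∈ Fintype.piFinset (fun _ : ι => A), g (f ∘ σ) =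
      ∑ f ∈ Fintype.piFinset (fun _ : ι => A), g f := by
  refine Finset.sum_equiv (σ.symm.arrowCongr (Equiv.refl α)) (fun f => ?_) fun _ _ => rfl
  simp only [Fintype.mem_piFinset]
  exact (σ.forall_congr_right (q := fun i => f i ∈ A)).symm

lemma sum_piFinset_le_of_monotone [LinearOrder α] {n : ℕ} (A : Finset α) {g G : (Fin n → α) → ℝ}
    (hsymm : ∀ (f : Fin n → α) (σ : Equiv.Perm (Fin n)), g (f ∘ σ) = g f)
    (hG : ∀ f, 0 ≤ G f) (hgG : ∀ f, Monotone f → g f ≤ G f) :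
    ∑ f ∈ Fintype.piFinset (fun _ : Fin n => A), g f ≤
      n.factorial * ∑ f ∈ Fintype.piFinset (fun _ : Fin n => A), G f := by
  have le_sum_perm (f : Fin n → α) : g f ≤ ∑ σ : Equiv.Perm (Fin n), G (f ∘ σ) := by
    calc g f = g (f ∘ Tuple.sort f) := (hsymm f _).symm
      _ ≤ G (f ∘ Tuple.sort f) := hgG _ (Tuple.monotone_sort f)
      _ ≤ _ := Finset.single_le_sum (f := fun σ : Equiv.Perm (Fin n) => G (f ∘ σ))
          (fun _ _ => hG _) (Finset.mem_univ _)
  refine (Finset.sum_le_sum fun f _ => le_sum_perm f).trans_eq ?_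
  rw [Finset.sum_comm]
  simp only [sum_piFinset_comp_perm, Finset.sum_const, Finset.card_univ, Fintype.card_perm,
    Fintype.card_fin, nsmul_eq_mul]

lemma sum_piFinset_fin_four [AddCommMonoid β] (A : Finset α) (g : α → α → α → α → β) :
    ∑ f ∈ Fintype.piFinset (fun _ : Fin 4 => A), g (f 0) (f 1) (f 2) (f 3) =
      ∑ i ∈ A, ∑ j ∈ A, ∑ k ∈ A, ∑ l ∈ A, g i j k l := by
  simp only [← Finset.sum_product']
  refine Finset.sum_nbij' (fun f => (f 0, f 1, f 2, f 3))
    (fun p => ![p.1, p.2.1, p.2.2.1, p.2.2.2]) ?_ ?_ ?_ (fun _ _ => rfl) (fun _ _ => rfl)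
  · intro f hf
    rw [Fintype.mem_piFinset] at hf
    simp only [Finset.mem_product, hf, and_self]
  · intro p hp
    simp only [Finset.mem_product] at hp
    simp [Fin.forall_fin_succ, hp]
  · intro f _
    ext a
    fin_cases a <;> rfl

end PiFinsetSums

section FourthMoment

variable {M : Type*} [MeasurableSpace M] {μ : Measure M} {X : ℕ → M → ℝ} {ρ : ℕ → ℝ}

lemma sum_piFinset_fourPointBound_le (hρ : ∀ n, 0 ≤ ρ n)
    (hs : Summable fun n : ℕ => (n : ℝ) * ρ n) (A : Finset ℕ) :
    ∑ f ∈ Fintype.piFinset (fun _ : Fin 4 => A), fourPointBound ρ (f 0) (f 1) (f 2) (f 3) ≤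
      (rateMass ρ ^ 2 + 3 * rateMass ρ) * (A.card : ℝ) ^ 2 := by
  have hpairs : ∑ f ∈ Fintype.piFinset (fun _ : Fin 4 => A),
      ρ (Nat.dist (f 0) (f 1)) * ρ (Nat.dist (f 2) (f 3)) ≤ (A.card * rateMass ρ) ^ 2 := by
    rw [sum_piFinset_fin_four A fun i j k l => ρ (Nat.dist i j) * ρ (Nat.dist k l)]
    simp only [← Finset.mul_sum, ← Finset.sum_mul, ← sq]
    exact pow_le_pow_left₀ (Finset.sum_nonneg fun _ _ => Finset.sum_nonneg fun _ _ => hρ _)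
      (sum_sum_rate_dist_le hρ hs A) 2
  let firstGap : (Fin 4 → ℕ) → ℝ := fun f => dominantGap ρ (f 0) (f 1) (f 2)
  have hgap : ∑ f ∈ Fintype.piFinset (fun _ : Fin 4 => A), firstGap f ≤
      A.card * (A.card * rateMass ρ) := by
    rw [sum_piFinset_fin_four A fun i j k _ => dominantGap ρ i j k]
    simp only [Finset.sum_const, nsmul_eq_mul, ← Finset.mul_sum]
    exact mul_le_mul_of_nonneg_left (sum_dominantGap_le hρ hs A) (Nat.cast_nonneg _)
  have hswap : ∑ f ∈ Fintype.piFinset (fun _ : Fin 4 => A), dominantGap ρ (f 2) (f 1) (f 0) =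
      ∑ f ∈ Fintype.piFinset (fun _ : Fin 4 => A), firstGap f :=
    sum_piFinset_comp_perm A firstGap (Equiv.swap 0 2)
  have hrev : ∑ f ∈ Fintype.piFinset (fun _ : Fin 4 => A), dominantGap ρ (f 3) (f 2) (f 1) =
      ∑ f ∈ Fintype.piFinset (fun _ : Fin 4 => A), firstGap f :=
    sum_piFinset_comp_perm A firstGap Fin.revPerm
  simp only [fourPointBound, Finset.sum_add_distrib, hswap, hrev]
  linarith

lemma integral_sum_pow_four_le [IsFiniteMeasure μ] (hXmeas : ∀ n, Measurable (X n))
    {L : ℝ} (hbdd : ∀ n x, |X n x| ≤ L) (hcent : ∀ n, ∫ x, X n x ∂μ = 0)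
    (hρ : ProductDecorrelation μ X ρ) (hs : Summable fun n : ℕ => (n : ℝ) * ρ n) (A : Finset ℕ) :
    ∫ x, (∑ i ∈ A, X i x) ^ 4 ∂μ ≤
      24 * (rateMass ρ ^ 2 + 3 * rateMass ρ) * (A.card : ℝ) ^ 2 := by
  have hint (f : Fin 4 → ℕ) : Integrable (fun x => ∏ s, X (f s) x) μ := by
    refine Integrable.of_bound (Finset.measurable_prod _ fun s _ => hXmeas _).aestronglyMeasurable
      (∏ _s : Fin 4, L) (ae_of_all _ fun x => ?_)
    rw [norm_prod]
    exact Finset.prod_le_prod (fun _ _ => norm_nonneg _) fun s _ => hbdd _ _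
  have expand : ∫ x, (∑ i ∈ A, X i x) ^ 4 ∂μ =
      ∑ f ∈ Fintype.piFinset (fun _ : Fin 4 => A), ∫ x, ∏ s, X (f s) x ∂μ := by
    simp only [Finset.sum_pow', integral_finsetSum _ fun f _ => hint f]
  rw [expand, mul_assoc]
  refine (sum_piFinset_le_of_monotone A ?_ ?_ ?_).trans
    (mul_le_mul_of_nonneg_left (sum_piFinset_fourPointBound_le hρ.rate_nonneg hs A) (by norm_num))
  · intro f σ
    exact integral_congr_ae (ae_of_all _ fun x => Equiv.prod_comp σ fun s => X (f s) x)
  · exact fun f => fourPointBound_nonneg hρ.rate_nonneg _ _ _ _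
  · intro f hf
    simp only [Fin.prod_univ_four]
    exact (le_abs_self _).trans (hρ.abs_integral_mul_mul_mul_le hcent (hf (by decide))
      (hf (by decide)) (hf (by decide)))

lemma lintegral_enorm_sum_pow_four_le [IsFiniteMeasure μ] (hXmeas : ∀ n, Measurable (X n))
    {L : ℝ} (hbdd : ∀ n x, |X n x| ≤ L) (hcent : ∀ n, ∫ x, X n x ∂μ = 0)
    (hρ : ProductDecorrelation μ X ρ) (hs : Summable fun n : ℕ => (n : ℝ) * ρ n) (A : Finset ℕ) :
    ∫⁻ x, ‖∑ i ∈ A, X i x‖ₑ ^ 4 ∂μ ≤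
      ENNReal.ofReal (24 * (rateMass ρ ^ 2 + 3 * rateMass ρ)) * (A.card : ℝ≥0∞) ^ 2 := by
  have hmass := rateMass_nonneg hρ.rate_nonneg
  have heven (x : M) : ‖∑ i ∈ A, X i x‖ₑ ^ 4 = ENNReal.ofReal ((∑ i ∈ A, X i x) ^ 4) := by
    rw [← Real.enorm_of_nonneg (by positivity), enorm_pow]
  have hint : Integrable (fun x => (∑ i ∈ A, X i x) ^ 4) μ := by
    refine Integrable.of_bound
      ((Finset.measurable_sum _ fun i _ => hXmeas i).pow_const 4).aestronglyMeasurable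
      ((A.card * L) ^ 4) (ae_of_all _ fun x => ?_)
    rw [norm_pow, ← nsmul_eq_mul]
    gcongr
    exact (norm_sum_le _ _).trans (Finset.sum_le_card_nsmul _ _ _ fun i _ => hbdd i x)
  simp only [heven]
  rw [← ofReal_integral_eq_lintegral_ofReal hint (ae_of_all _ fun x => by positivity),
    ← ENNReal.ofReal_natCast, ← ENNReal.ofReal_pow (Nat.cast_nonneg _),
    ← ENNReal.ofReal_mul (by positivity)]
  exact ENNReal.ofReal_le_ofReal (integral_sum_pow_four_le hXmeas hbdd hcent hρ hs A)

end FourthMoment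

/-- Along the dyadic block `[a, a + 2 ^ p)`, the chaining majorant of the partial sums of `y` that
start at `a`: at each scale it adds the sum over the left half, used when the partial sum ends in
the right half. -/
def dyadicMax {E : Type*} [NormedAddCommGroup E] (y : ℕ → E) : ℕ → ℕ → ℝ≥0∞
  | 0, a => ‖y a‖ₑ
  | p + 1, a => max (dyadicMax y p a) (dyadicMax y p (a + 2 ^ p)) +
      ‖∑ i ∈ Finset.Ico a (a + 2 ^ p), y i‖ₑ

lemma enorm_sum_Ico_le_dyadicMax {E : Type*} [NormedAddCommGroup E] (y : ℕ → E) {p a k : ℕ}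
    (hk : k ≤ 2 ^ p) : ‖∑ i ∈ Finset.Ico a (a + k), y i‖ₑ ≤ dyadicMax y p a := by
  induction p generalizing a k with
  | zero =>
    rw [pow_zero] at hk
    interval_cases k <;> simp [dyadicMax]
  | succ p ih =>
    rcases le_or_gt k (2 ^ p) with hleft | hright
    · exact (ih hleft).trans (le_add_right (le_max_left _ _))
    · have htail : k - 2 ^ p ≤ 2 ^ p := by rw [pow_succ] at hk; omega
      have hend : a + k = a + 2 ^ p + (k - 2 ^ p) := by omega
      rw [← Finset.sum_Ico_consecutive y (Nat.le_add_right a (2 ^ p)) (by omega), hend,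
        add_comm (∑ i ∈ _, y i)]
      refine (enorm_add_le _ _).trans ?_
      rw [dyadicMax]
      gcongr
      exact (ih htail).trans (le_max_right _ _)

-- The factor `3 / 2` is below `2`: this is what makes the bound on `dyadicMax` grow like `4 ^ p`.
lemma add_pow_four_le (s t : ℝ≥0∞) : (s + t) ^ 4 ≤ 3 / 2 * s ^ 4 + 900 * t ^ 4 := by
  have real_case (a b : ℝ) : (a + b) ^ 4 ≤ 3 / 2 * a ^ 4 + 900 * b ^ 4 := by
    have hsq : (a + b) ^ 2 ≤ 6 / 5 * a ^ 2 + 6 * b ^ 2 := by nlinarith [sq_nonneg (a - 5 * b)]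
    have hquartic := pow_le_pow_left₀ (sq_nonneg _) hsq 2
    nlinarith [sq_nonneg (a ^ 2 - 120 * b ^ 2)]
  rcases eq_or_ne s ∞ with rfl | hs
  · simp [ENNReal.mul_top]
  rcases eq_or_ne t ∞ with rfl | ht
  · simp [ENNReal.mul_top]
  lift s to ℝ≥0 using hs
  lift t to ℝ≥0 using ht
  have hcoe : (3 / 2 : ℝ≥0∞) = (3 / 2 : ℝ≥0) := by simp
  rw [hcoe]
  exact_mod_cast real_case s t

lemma max_add_pow_four_le (r s t : ℝ≥0∞) :
    (max r s + t) ^ 4 ≤ 3 / 2 * (r ^ 4 + s ^ 4) + 900 * t ^ 4 := by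
  refine (add_pow_four_le _ _).trans ?_
  gcongr
  rcases max_choice r s with h | h <;> rw [h]
  exacts [le_self_add, le_add_self]

section MaximalInequality

variable {M E : Type*} [MeasurableSpace M] {μ : Measure M} [NormedAddCommGroup E]
  [MeasurableSpace E] [BorelSpace E] [SecondCountableTopology E] {Y : ℕ → M → E} {K : ℝ≥0∞}

lemma measurable_enorm_sum (hY : ∀ n, Measurable (Y n)) (A : Finset ℕ) :
    Measurable fun x => ‖∑ i ∈ A, Y i x‖ₑ :=
  (Finset.measurable_sum _ fun i _ => hY i).enorm

lemma measurable_dyadicMax (hY : ∀ n, Measurable (Y n)) (p a : ℕ) :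
    Measurable fun x => dyadicMax (Y · x) p a := by
  induction p generalizing a with
  | zero => exact (hY a).enorm
  | succ p ih => exact ((ih a).max (ih _)).add (measurable_enorm_sum hY _)

variable (hY : ∀ n, Measurable (Y n))
include hY

lemma lintegral_dyadicMax_pow_four_le
    (hmom : ∀ a k : ℕ, ∫⁻ x, ‖∑ i ∈ Finset.Ico a (a + k), Y i x‖ₑ ^ 4 ∂μ ≤ K * (k : ℝ≥0∞) ^ 2)
    (p a : ℕ) : ∫⁻ x, dyadicMax (Y · x) p a ^ 4 ∂μ ≤ 900 * K * 4 ^ p := by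
  induction p generalizing a with
  | zero =>
    calc _ ≤ K := by simpa [dyadicMax] using hmom a 1
      _ = 1 * K * 4 ^ 0 := by simp
      _ ≤ 900 * K * 4 ^ 0 := by gcongr; norm_num
  | succ p ih =>
    have hblock : ∫⁻ x, ‖∑ i ∈ Finset.Ico a (a + 2 ^ p), Y i x‖ₑ ^ 4 ∂μ ≤ K * 4 ^ p := by
      refine (hmom a (2 ^ p)).trans_eq ?_
      push_cast
      rw [pow_right_comm]
      norm_num
    have hmeas (b : ℕ) := (measurable_dyadicMax hY p b).pow_const 4
    have hmeas_add : Measurable fun x =>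
        dyadicMax (Y · x) p a ^ 4 + dyadicMax (Y · x) p (a + 2 ^ p) ^ 4 := (hmeas _).add (hmeas _)
    calc ∫⁻ x, dyadicMax (Y · x) (p + 1) a ^ 4 ∂μ
        ≤ ∫⁻ x, 3 / 2 * (dyadicMax (Y · x) p a ^ 4 + dyadicMax (Y · x) p (a + 2 ^ p) ^ 4) +
            900 * ‖∑ i ∈ Finset.Ico a (a + 2 ^ p), Y i x‖ₑ ^ 4 ∂μ := by
          exact lintegral_mono fun x => max_add_pow_four_le _ _ _
      _ = 3 / 2 * (∫⁻ x, dyadicMax (Y · x) p a ^ 4 ∂μ +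
            ∫⁻ x, dyadicMax (Y · x) p (a + 2 ^ p) ^ 4 ∂μ) +
            900 * ∫⁻ x, ‖∑ i ∈ Finset.Ico a (a + 2 ^ p), Y i x‖ₑ ^ 4 ∂μ := by
          rw [lintegral_add_left (hmeas_add.const_mul _), lintegral_const_mul _ hmeas_add,
            lintegral_add_left (hmeas _),
            lintegral_const_mul _ ((measurable_enorm_sum hY _).pow_const 4)]
      _ ≤ 3 / 2 * (900 * K * 4 ^ p + 900 * K * 4 ^ p) + 900 * (K * 4 ^ p) := by
          gcongr
          exacts [ih a, ih _]
      _ = 900 * K * 4 ^ (p + 1) := by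
          rw [← two_mul, ← mul_assoc, ENNReal.div_mul_cancel two_ne_zero ENNReal.ofNat_ne_top]
          ring

lemma measure_exists_le_enorm_sum_Ico_le
    (hmom : ∀ a k : ℕ, ∫⁻ x, ‖∑ i ∈ Finset.Ico a (a + k), Y i x‖ₑ ^ 4 ∂μ ≤ K * (k : ℝ≥0∞) ^ 2)
    (N p : ℕ) {c : ℝ≥0∞} (hc : c ≠ 0) (hc' : c ≠ ∞) :
    μ {x | ∃ u v, u ≤ v ∧ v ≤ u + 2 ^ p ∧ u ≤ N ∧ 2 * c ≤ ‖∑ i ∈ Finset.Ico u v, Y i x‖ₑ} ≤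
      (N / 2 ^ p + 1 : ℕ) * (900 * K * 4 ^ (p + 1) / c ^ 4) := by
  have hpos : 0 < 2 ^ p := by positivity
  have hcover : {x | ∃ u v, u ≤ v ∧ v ≤ u + 2 ^ p ∧ u ≤ N ∧
        2 * c ≤ ‖∑ i ∈ Finset.Ico u v, Y i x‖ₑ} ⊆
      ⋃ j ∈ Finset.range (N / 2 ^ p + 1),
        {x | c ^ 4 ≤ dyadicMax (Y · x) (p + 1) (j * 2 ^ p) ^ 4} := by
    rintro x ⟨u, v, huv, hv, hu, hlarge⟩
    set a := u / 2 ^ p * 2 ^ p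
    have hau : a ≤ u := Nat.div_mul_le_self _ _
    have hua : u < a + 2 ^ p := Nat.lt_div_mul_add hpos
    have le_dyadicMax {w : ℕ} (haw : a ≤ w) (hw : w ≤ a + 2 ^ (p + 1)) :
        ‖∑ i ∈ Finset.Ico a w, Y i x‖ₑ ≤ dyadicMax (Y · x) (p + 1) a := by
      obtain ⟨k, rfl⟩ := Nat.exists_eq_add_of_le haw
      exact enorm_sum_Ico_le_dyadicMax (Y · x) (Nat.add_le_add_iff_left.1 hw)
    have hdiff := Finset.sum_Ico_consecutive (Y · x) hau huv
    rw [← eq_sub_iff_add_eq'] at hdiff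
    have htwo : 2 * c ≤ 2 * dyadicMax (Y · x) (p + 1) a := by
      rw [pow_succ] at le_dyadicMax
      rw [two_mul (dyadicMax _ _ _)]
      calc _ ≤ _ := hlarge.trans_eq (congrArg _ hdiff)
        _ ≤ _ := enorm_sub_le.trans (add_le_add (le_dyadicMax (hau.trans huv) (by omega))
            (le_dyadicMax hau (by omega)))
    rw [ENNReal.mul_le_mul_iff_right two_ne_zero ENNReal.ofNat_ne_top] at htwo
    exact Set.mem_biUnion (Finset.mem_coe.2 (Finset.mem_range_succ_iff.2 (Nat.div_le_div_right hu)))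
      (pow_le_pow_left₀ zero_le htwo 4)
  have hmarkov (j : ℕ) : μ {x | c ^ 4 ≤ dyadicMax (Y · x) (p + 1) (j * 2 ^ p) ^ 4} ≤
      900 * K * 4 ^ (p + 1) / c ^ 4 :=
    (meas_ge_le_lintegral_div ((measurable_dyadicMax hY _ _).pow_const 4).aemeasurable
      (pow_ne_zero 4 hc) (ENNReal.pow_ne_top hc')).trans
      (ENNReal.div_le_div_right (lintegral_dyadicMax_pow_four_le hY hmom _ _) _)
  calc _ ≤ _ := (measure_mono hcover).trans (measure_biUnion_finset_le _ _)
    _ ≤ _ := Finset.sum_le_card_nsmul _ _ _ fun j _ => hmarkov j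
    _ = _ := by rw [Finset.card_range, nsmul_eq_mul]

end MaximalInequality

/-- The indices `n < N` whose level `b n` lies in `(s, s']`. -/
def levelWindow {α : Type*} [LinearOrder α] (b : ℕ → α) (N : ℕ) (s s' : α) : Finset ℕ :=
  (Finset.range N).filter fun n => s < b n ∧ b n ≤ s'

lemma mem_levelWindow {α : Type*} [LinearOrder α] {b : ℕ → α} {N n : ℕ} {s s' : α} :
    n ∈ levelWindow b N s s' ↔ n < N ∧ s < b n ∧ b n ≤ s' := by
  rw [levelWindow, Finset.mem_filter, Finset.mem_range]

lemma exists_perm_levelWindow_eq_map_Ico {α : Type*} [LinearOrder α] (b : ℕ → α) (N : ℕ) :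
    ∃ (π : Equiv.Perm ℕ) (κ : α → ℕ), Monotone κ ∧ (∀ s, κ s ≤ N) ∧
      ∀ s s', levelWindow b N s s' = (Finset.Ico (κ s) (κ s')).map π.toEmbedding := by
  set f : Fin N → α := fun i => b i
  set σ := Tuple.sort f
  have hsorted : Monotone (f ∘ σ) := Tuple.monotone_sort f
  set π := σ.viaFintypeEmbedding Fin.valEmbedding
  have π_apply (i : Fin N) : π i = σ i := σ.viaFintypeEmbedding_apply_image Fin.valEmbedding i
  set κ : α → ℕ := fun s => Finset.card {i | (f ∘ σ) i ≤ s}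
  have lt_κ_iff (i : Fin N) (s : α) : (i : ℕ) < κ s ↔ f (σ i) ≤ s :=
    Tuple.lt_card_le_iff_apply_le_of_monotone hsorted
  have hκN (s : α) : κ s ≤ N := (Finset.card_le_univ _).trans_eq (Fintype.card_fin N)
  refine ⟨π, κ, fun s s' hs => Finset.card_le_card fun i => ?_, hκN, fun s s' => ?_⟩
  · simp only [Finset.mem_filter_univ]
    exact fun hi => hi.trans hs
  · ext n
    simp only [mem_levelWindow, Finset.mem_map, Finset.mem_Ico, Equiv.coe_toEmbedding]
    constructor
    · rintro ⟨hn, hs, hs'⟩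
      obtain ⟨i, hi⟩ := σ.surjective ⟨n, hn⟩
      have hfi : f (σ i) = b n := by rw [hi]
      exact ⟨i, ⟨not_lt.1 fun h => hs.not_ge (hfi ▸ (lt_κ_iff i s).1 h),
        (lt_κ_iff i s').2 (hfi ▸ hs')⟩, by rw [π_apply, hi]⟩
    · rintro ⟨i, ⟨hs, hs'⟩, rfl⟩
      lift i to Fin N using hs'.trans_le (hκN s')
      rw [π_apply]
      exact ⟨(σ i).isLt, not_le.1 fun h => hs.not_gt ((lt_κ_iff i s).2 h), (lt_κ_iff i s').1 hs'⟩

lemma exists_le_two_pow_le_two_mul {q : ℕ} (hq : 1 ≤ q) : ∃ p, q ≤ 2 ^ p ∧ 2 ^ p ≤ 2 * q := by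
  obtain ⟨p, hle, hlt⟩ := exists_nat_pow_near hq one_lt_two
  exact ⟨p + 1, hlt.le, by rw [pow_succ, mul_comm]; gcongr⟩

-- Only the order of the indices changes under sorting, and the moment bound is insensitive to it.
lemma measure_exists_le_enorm_sum_levelWindow_le {M E α : Type*} [MeasurableSpace M]
    {μ : Measure M} [NormedAddCommGroup E] [MeasurableSpace E] [BorelSpace E]
    [SecondCountableTopology E] [LinearOrder α] {X : ℕ → M → E} {K : ℝ≥0∞}
    (hXmeas : ∀ n, Measurable (X n))
    (hmom : ∀ A : Finset ℕ, ∫⁻ x, ‖∑ i ∈ A, X i x‖ₑ ^ 4 ∂μ ≤ K * (A.card : ℝ≥0∞) ^ 2)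
    (b : ℕ → α) (N : ℕ) {q : ℕ} (hq : 1 ≤ q) {c : ℝ≥0∞} (hc : c ≠ 0) (hc' : c ≠ ∞) :
    μ {x | ∃ s s', s ≤ s' ∧ (levelWindow b N s s').card ≤ q ∧
        2 * c ≤ ‖∑ n ∈ levelWindow b N s s', X n x‖ₑ} ≤
      14400 * K * (q * (N + q) : ℕ) / c ^ 4 := by
  obtain ⟨π, κ, hκ, hκN, hwindow⟩ := exists_perm_levelWindow_eq_map_Ico b N
  obtain ⟨p, hqp, hpq⟩ := exists_le_two_pow_le_two_mul hq
  have hsub : {x | ∃ s s', s ≤ s' ∧ (levelWindow b N s s').card ≤ q ∧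
        2 * c ≤ ‖∑ n ∈ levelWindow b N s s', X n x‖ₑ} ⊆
      {x | ∃ u v, u ≤ v ∧ v ≤ u + 2 ^ p ∧ u ≤ N ∧
        2 * c ≤ ‖∑ i ∈ Finset.Ico u v, X (π i) x‖ₑ} := by
    rintro x ⟨s, s', hs, hcard, hlarge⟩
    rw [hwindow, Finset.card_map, Nat.card_Ico] at hcard
    rw [hwindow, Finset.sum_map] at hlarge
    exact ⟨κ s, κ s', hκ hs, by omega, hκN s, hlarge⟩
  have hmom_sorted (a k : ℕ) :
      ∫⁻ x, ‖∑ i ∈ Finset.Ico a (a + k), X (π i) x‖ₑ ^ 4 ∂μ ≤ K * (k : ℝ≥0∞) ^ 2 := by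
    simpa using hmom ((Finset.Ico a (a + k)).map π.toEmbedding)
  have hcount : (N / 2 ^ p + 1) * 4 ^ (p + 1) ≤ 16 * (q * (N + q)) := by
    calc (N / 2 ^ p + 1) * 4 ^ (p + 1)
        = 4 * (N / 2 ^ p * 2 ^ p + 2 ^ p) * 2 ^ p := by
          rw [pow_succ, show 4 = 2 * 2 from rfl, mul_pow]; ring
      _ ≤ 4 * (N + 2 * q) * (2 * q) := by gcongr; exact Nat.div_mul_le_self _ _
      _ ≤ 16 * (q * (N + q)) := by nlinarith
  calc _ ≤ (N / 2 ^ p + 1 : ℕ) * (900 * K * 4 ^ (p + 1) / c ^ 4) :=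
        (measure_mono hsub).trans (measure_exists_le_enorm_sum_Ico_le (fun n => hXmeas (π n))
          hmom_sorted N p hc hc')
    _ = 900 * K * ((N / 2 ^ p + 1) * 4 ^ (p + 1) : ℕ) / c ^ 4 := by
        simp only [div_eq_mul_inv]
        push_cast
        ring
    _ ≤ 900 * K * (16 * (q * (N + q)) : ℕ) / c ^ 4 := by gcongr
    _ = 14400 * K * (q * (N + q) : ℕ) / c ^ 4 := by
        rw [Nat.cast_mul 16, show (14400 : ℝ≥0∞) = 900 * 16 by norm_num, Nat.cast_ofNat]
        ring_nf

lemma monotone_clamp : Monotone clamp := fun _ _ h => max_le_max_left _ (min_le_min_left _ h)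

lemma le_clamp_add {t δ : ℝ} (ht : t ≤ 1) (hδ : 0 ≤ δ) : t ≤ clamp (t + δ) :=
  le_max_of_le_right (le_min ht (le_add_of_nonneg_right hδ))

lemma clamp_le {r : ℝ} (hr : 0 ≤ r) : clamp r ≤ r := max_le hr (min_le_right _ _)

lemma norm_integral_zero_one_sub_le {E : Type*} [NormedAddCommGroup E] [NormedSpace ℝ E]
    [CompleteSpace E] {f : ℝ → E} (hf : IntervalIntegrable f volume 0 1) {a : E} {c : ℝ}
    (h : ∀ u ∈ Set.Icc (0 : ℝ) 1, ‖f u - a‖ ≤ c) : ‖(∫ u in (0 : ℝ)..1, f u) - a‖ ≤ c := by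
  have hsub : (∫ u in (0 : ℝ)..1, f u) - a = ∫ u in (0 : ℝ)..1, f u - a := by
    rw [intervalIntegral.integral_sub hf intervalIntegrable_const]
    simp
  rw [hsub]
  refine (intervalIntegral.norm_integral_le_of_norm_le_const fun u hu => ?_).trans_eq
    (by rw [sub_zero, abs_one, mul_one])
  rw [Set.uIoc_of_le zero_le_one] at hu
  exact h u (Set.Ioc_subset_Icc_self hu)

section SmoothedProcess

variable {M : Type*} [MeasurableSpace M] {μ : Measure M} {X : ℕ → M → ℝ} {N : ℕ}

lemma WNval_sub_WNval (hB : 0 < Bvar μ X N) {t t' : ℝ} (htt' : t ≤ t') (x : M) :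
    WNval μ X N t' x - WNval μ X N t x = Bvar μ X N ^ (-(1 : ℝ) / 2) *
      ∑ n ∈ levelWindow (Bpart μ X N) N (t * Bvar μ X N) (t' * Bvar μ X N), X n x := by
  rw [WNval, WNval, ← mul_sub, ← Finset.sum_sub_distrib, levelWindow, Finset.sum_filter]
  congr 1
  refine Finset.sum_congr rfl fun n _ => ?_
  simp only [div_le_iff₀ hB]
  have := mul_le_mul_of_nonneg_right htt' hB.le
  split_ifs <;> grind

lemma intervalIntegrable_WNval_clamp {ε : ℝ} (hε : 0 ≤ ε) (t : ℝ) (x : M) :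
    IntervalIntegrable (fun u => WNval μ X N (clamp (t + ε * u)) x) volume 0 1 := by
  have hmono (r : ℝ) : Monotone fun u => if r ≤ clamp (t + ε * u) then (1 : ℝ) else 0 := by
    intro u v huv
    have : clamp (t + ε * u) ≤ clamp (t + ε * v) := monotone_clamp (by gcongr)
    dsimp only
    split_ifs <;> grind
  have hsum := IntervalIntegrable.sum (Finset.range N) fun n _ =>
    (hmono (Bpart μ X N n / Bvar μ X N)).intervalIntegrable (μ := volume)
      (a := 0) (b := 1) |>.mul_const (X n x)
  simpa only [WNval, Finset.sum_apply] using hsum.const_mul (Bvar μ X N ^ (-(1 : ℝ) / 2))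

lemma smoothDist_le (hB : 0 < Bvar μ X N) {ε : ℝ} (hε : 0 ≤ ε) {x : M} {c : ℝ}
    (hwindow : ∀ s s', s ≤ s' → s' ≤ s + ε * Bvar μ X N →
      |∑ n ∈ levelWindow (Bpart μ X N) N s s', X n x| ≤ c) :
    smoothDist μ X N ε x ≤ Bvar μ X N ^ (-(1 : ℝ) / 2) * c := by
  refine ciSup_le fun ⟨t, ht0, ht1⟩ => ?_
  refine norm_integral_zero_one_sub_le (intervalIntegrable_WNval_clamp hε t x)
    fun u ⟨hu0, hu1⟩ => ?_
  have hεu : 0 ≤ ε * u := mul_nonneg hε hu0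
  have hle : t ≤ clamp (t + ε * u) := le_clamp_add ht1 hεu
  have hge : clamp (t + ε * u) ≤ t + ε :=
    (clamp_le (add_nonneg ht0 hεu)).trans (by gcongr; exact mul_le_of_le_one_right hε hu1)
  rw [WNval_sub_WNval hB hle, norm_mul, Real.norm_of_nonneg (by positivity)]
  gcongr
  refine hwindow _ _ (by gcongr) ?_
  calc _ ≤ (t + ε) * Bvar μ X N := by gcongr
    _ = _ := add_mul _ _ _

lemma exists_le_abs_sum_levelWindow_of_le_smoothDist (hB : 0 < Bvar μ X N) {ε : ℝ} (hε : 0 ≤ ε)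
    {lam : ℝ} (hlam : 0 < lam) {x : M} (hx : lam ≤ smoothDist μ X N ε x) :
    ∃ s s', s ≤ s' ∧ s' ≤ s + ε * Bvar μ X N ∧
      lam / 2 * √(Bvar μ X N) ≤ |∑ n ∈ levelWindow (Bpart μ X N) N s s', X n x| := by
  by_contra! hsmall
  have hrescale : Bvar μ X N ^ (-(1 : ℝ) / 2) * (lam / 2 * √(Bvar μ X N)) = lam / 2 := by
    rw [neg_div, Real.rpow_neg hB.le, ← Real.sqrt_eq_rpow]
    field
  have hle := smoothDist_le hB hε fun s s' hs hs' => (hsmall s s' hs hs').le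
  exact (half_lt_self hlam).not_ge (hx.trans (hle.trans_eq hrescale))

end SmoothedProcess

section Growth

variable {b : ℕ → ℝ} {N m : ℕ} {C : ℝ}

lemma half_mul_le_sub_of_gap (hm : 1 ≤ m) (hC : 0 < C)
    (hgap : ∀ u v : ℕ, u < v → v < N → m ≤ v - u → C * m ≤ b v - b u) {u d : ℕ} (hd : m ≤ d)
    (hN : u + d < N) : C * d / 2 ≤ b (u + d) - b u := by
  induction d using Nat.strong_induction_on generalizing u with
  | _ d ih =>
    rcases lt_or_ge d (2 * m) with hshort | hlong
    · have hjump := hgap u (u + d) (by omega) hN (by omega)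
      have hdm : (d : ℝ) ≤ 2 * m := by exact_mod_cast hshort.le
      nlinarith
    · obtain ⟨k, rfl⟩ := Nat.exists_eq_add_of_le hd
      have hjump := hgap u (u + m) (by omega) (by omega) (by omega)
      have hrest := ih k (by omega) (u := u + m) (by omega) (by omega)
      have hCm : 0 ≤ C * m := by positivity
      rw [← add_assoc]
      push_cast
      linarith

lemma card_levelWindow_le (hm : 1 ≤ m) (hC : 0 < C)
    (hgap : ∀ u v : ℕ, u < v → v < N → m ≤ v - u → C * m ≤ b v - b u) {s s' : ℝ} (hs : s ≤ s') :
    ((levelWindow b N s s').card : ℝ) ≤ m + 2 * (s' - s) / C + 1 := by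
  have hratio : 0 ≤ 2 * (s' - s) / C := div_nonneg (by linarith) hC.le
  rcases (levelWindow b N s s').eq_empty_or_nonempty with hempty | hne
  · rw [hempty, Finset.card_empty, Nat.cast_zero]
    positivity
  obtain ⟨u, hu, hmin⟩ : ∃ u ∈ levelWindow b N s s', ∀ v ∈ levelWindow b N s s', u ≤ v :=
    ⟨_, Finset.min'_mem _ hne, fun v hv => Finset.min'_le _ v hv⟩
  obtain ⟨-, hsu, -⟩ := mem_levelWindow.1 hu
  have hsub : levelWindow b N s s' ⊆ Finset.Icc u (u + (m + ⌊2 * (s' - s) / C⌋₊)) := by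
    intro v hv
    obtain ⟨d, rfl⟩ := Nat.exists_eq_add_of_le (hmin v hv)
    obtain ⟨hvN, -, hvs'⟩ := mem_levelWindow.1 hv
    refine Finset.mem_Icc.2 ⟨Nat.le_add_right _ _, Nat.add_le_add_left ?_ u⟩
    rcases lt_or_ge d m with hshort | hlong
    · omega
    · have hgrowth := half_mul_le_sub_of_gap hm hC hgap hlong hvN
      have hd : (d : ℝ) ≤ 2 * (s' - s) / C := by rw [le_div_iff₀ hC]; linarith
      exact le_add_left (Nat.le_floor hd)
  have hcard : (levelWindow b N s s').card ≤ m + ⌊2 * (s' - s) / C⌋₊ + 1 := by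
    have := Finset.card_le_card hsub
    rw [Nat.card_Icc] at this
    omega
  calc ((levelWindow b N s s').card : ℝ) ≤ m + ⌊2 * (s' - s) / C⌋₊ + 1 := by exact_mod_cast hcard
    _ ≤ m + 2 * (s' - s) / C + 1 := by gcongr; exact Nat.floor_le hratio

end Growth

section Variance

variable {M : Type*} [MeasurableSpace M] {μ : Measure M} {X : ℕ → M → ℝ} {ρ : ℕ → ℝ}

lemma Bpart_zero (N : ℕ) : Bpart μ X N 0 = 0 := Finset.sum_range_zero _

lemma Bpart_succ (N u : ℕ) :
    Bpart μ X N (u + 1) = Bpart μ X N u + ∑ j ∈ Finset.range N, sigmaCov μ X u j :=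
  Finset.sum_range_succ _ _

namespace ProductDecorrelation

variable (hcent : ∀ n, ∫ x, X n x ∂μ = 0) (hρ : ProductDecorrelation μ X ρ)
  (hs : Summable fun n : ℕ => (n : ℝ) * ρ n)
include hcent hρ hs

lemma abs_sum_sigmaCov_le (A : Finset ℕ) (i : ℕ) :
    |∑ j ∈ A, sigmaCov μ X i j| ≤ rateMass ρ :=
  (Finset.abs_sum_le_sum_abs _ _).trans <|
    (Finset.sum_le_sum fun j _ => hρ.abs_sigmaCov_le hcent i j).trans
      (sum_rate_dist_le hρ.rate_nonneg hs A i)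

lemma Bvar_le (N : ℕ) : Bvar μ X N ≤ N * rateMass ρ := by
  calc Bvar μ X N ≤ ∑ _i ∈ Finset.range N, rateMass ρ := by
        rw [Bvar, Bpart]
        exact Finset.sum_le_sum fun i _ =>
          (le_abs_self _).trans (abs_sum_sigmaCov_le hcent hρ hs _ i)
    _ = N * rateMass ρ := by rw [Finset.sum_const, Finset.card_range, nsmul_eq_mul]

variable {MN : ℕ → ℕ} (hMNo : Tendsto (fun N : ℕ => (MN N : ℝ) / Bvar μ X N) atTop (𝓝 0))
  (hBpos : ∀ᶠ N in atTop, 0 < Bvar μ X N)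
include hMNo hBpos

lemma eventually_two_mul_le : ∀ᶠ N in atTop, 2 * MN N ≤ N := by
  have hmass := rateMass_nonneg hρ.rate_nonneg
  have hη : 0 < 1 / (2 * (rateMass ρ + 1)) := by positivity
  filter_upwards [hBpos, hMNo.eventually_lt_const hη] with N hB hsmall
  rw [div_lt_div_iff₀ hB (by positivity)] at hsmall
  have hB_le := hρ.Bvar_le hcent hs N
  have hmul : 2 * (MN N : ℝ) * (rateMass ρ + 1) ≤ N * (rateMass ρ + 1) := by
    have : (0 : ℝ) ≤ N := N.cast_nonneg
    linarith
  exact_mod_cast le_of_mul_le_mul_right hmul (by positivity)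

lemma eventually_mul_le_Bvar (hMN1 : ∀ N, 1 ≤ MN N) {C : ℝ} (hC : 0 < C)
    (hgap : ∀ᶠ N in atTop, ∀ u v : ℕ, u < v → v < N → MN N ≤ v - u →
      C * MN N ≤ Bpart μ X N v - Bpart μ X N u) :
    ∀ᶠ N : ℕ in atTop, C / 4 * N ≤ Bvar μ X N := by
  have hlarge : ∀ᶠ N : ℕ in atTop, 2 + 4 * rateMass ρ / C ≤ N :=
    tendsto_natCast_atTop_atTop.eventually_ge_atTop _
  filter_upwards [hgap, hlarge, eventually_two_mul_le hcent hρ hs hMNo hBpos] with N hgapN hN hMN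
  have hM1 := hMN1 N
  obtain ⟨n, rfl⟩ : ∃ n, N = n + 1 := ⟨N - 1, by omega⟩
  have hgrowth := half_mul_le_sub_of_gap (u := 0) (d := n) hM1 hC hgapN (by omega) (by omega)
  rw [zero_add, Bpart_zero, sub_zero] at hgrowth
  have hrow := (abs_le.1 (abs_sum_sigmaCov_le hcent hρ hs (Finset.range (n + 1)) n)).1
  have hmass : 4 * rateMass ρ ≤ (((n + 1 : ℕ) : ℝ) - 2) * C := by
    rw [← div_le_iff₀ hC]
    linarith
  rw [Bvar, Bpart_succ]
  push_cast at hmass ⊢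
  linarith

end ProductDecorrelation

end Variance

section SmoothingBound

variable {M : Type*} [MeasurableSpace M] {μ : Measure M} {X : ℕ → M → ℝ} {N m : ℕ} {C ε lam : ℝ}

lemma exists_card_levelWindow_le_of_le_smoothDist (hm : 1 ≤ m) (hC : 0 < C)
    (hgap : ∀ u v : ℕ, u < v → v < N → m ≤ v - u → C * m ≤ Bpart μ X N v - Bpart μ X N u)
    (hB : 0 < Bvar μ X N) (hmε : m ≤ ε * Bvar μ X N) (hlam : 0 < lam) {x : M}
    (hx : lam ≤ smoothDist μ X N ε x) :
    ∃ s s', s ≤ s' ∧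
      (levelWindow (Bpart μ X N) N s s').card ≤ ⌊(2 + 2 / C) * (ε * Bvar μ X N)⌋₊ ∧
      2 * ENNReal.ofReal (lam / 4 * √(Bvar μ X N)) ≤
        ‖∑ n ∈ levelWindow (Bpart μ X N) N s s', X n x‖ₑ := by
  have hεB : 1 ≤ ε * Bvar μ X N := le_trans (by exact_mod_cast hm) hmε
  have hε : 0 ≤ ε := (pos_of_mul_pos_left (by linarith) hB.le).le
  obtain ⟨s, s', hs, hs', hlarge⟩ := exists_le_abs_sum_levelWindow_of_le_smoothDist hB hε hlam hx
  have hlength : s' - s ≤ ε * Bvar μ X N := by linarith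
  refine ⟨s, s', hs, Nat.le_floor ?_, ?_⟩
  · calc _ ≤ m + 2 * (s' - s) / C + 1 := card_levelWindow_le hm hC hgap hs
      _ ≤ ε * Bvar μ X N + 2 * (ε * Bvar μ X N) / C + ε * Bvar μ X N := by gcongr
      _ = (2 + 2 / C) * (ε * Bvar μ X N) := by ring
  · rw [Real.enorm_eq_ofReal_abs, ← ENNReal.ofReal_ofNat, ← ENNReal.ofReal_mul zero_le_two]
    exact ENNReal.ofReal_le_ofReal (le_trans (by linarith) hlarge)

lemma measure_le_smoothDist_le (hXmeas : ∀ n, Measurable (X n)) {K : ℝ≥0∞}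
    (hmom : ∀ A : Finset ℕ, ∫⁻ x, ‖∑ i ∈ A, X i x‖ₑ ^ 4 ∂μ ≤ K * (A.card : ℝ≥0∞) ^ 2)
    (hm : 1 ≤ m) (hC : 0 < C)
    (hgap : ∀ u v : ℕ, u < v → v < N → m ≤ v - u → C * m ≤ Bpart μ X N v - Bpart μ X N u)
    (hB : 0 < Bvar μ X N) (hNB : C / 4 * N ≤ Bvar μ X N) (hε : ε ≤ 1)
    (hmε : m ≤ ε * Bvar μ X N) (hlam : 0 < lam) :
    μ {x | lam ≤ smoothDist μ X N ε x} ≤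
      14400 * K * ENNReal.ofReal (256 / lam ^ 4 * (2 + 2 / C) * (2 + 6 / C) * ε) := by
  set B := Bvar μ X N
  set q := ⌊(2 + 2 / C) * (ε * B)⌋₊
  set c := lam / 4 * √B
  have hεB : 1 ≤ ε * B := le_trans (by exact_mod_cast hm) hmε
  have hlevels : 1 ≤ (2 + 2 / C) * (ε * B) :=
    one_le_mul_of_one_le_of_one_le (by linarith [div_pos two_pos hC]) hεB
  have hc : 0 < c := by positivity
  have hcount : ((q * (N + q) : ℕ) : ℝ) / c ^ 4 ≤
      256 / lam ^ 4 * (2 + 2 / C) * (2 + 6 / C) * ε := by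
    have hq : (q : ℝ) ≤ (2 + 2 / C) * (ε * B) := Nat.floor_le (by positivity)
    have hqB : (q : ℝ) ≤ (2 + 2 / C) * B :=
      hq.trans (by gcongr; exact mul_le_of_le_one_left hB.le hε)
    have hN : (N : ℝ) ≤ 4 / C * B := by
      rw [div_mul_eq_mul_div, le_div_iff₀ hC]
      linarith
    have hc4 : c ^ 4 = lam ^ 4 * B ^ 2 / 256 := by
      calc c ^ 4 = lam ^ 4 * (√B ^ 2) ^ 2 / 256 := by ring
        _ = _ := by rw [Real.sq_sqrt hB.le]
    rw [hc4]
    push_cast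
    calc _ ≤ (2 + 2 / C) * (ε * B) * (4 / C * B + (2 + 2 / C) * B) / (lam ^ 4 * B ^ 2 / 256) := by
          gcongr
      _ = _ := by field
  calc _ ≤ 14400 * K * (q * (N + q) : ℕ) / ENNReal.ofReal c ^ 4 :=
        (measure_mono fun x hx =>
          exists_card_levelWindow_le_of_le_smoothDist hm hC hgap hB hmε hlam hx).trans
          (measure_exists_le_enorm_sum_levelWindow_le hXmeas hmom _ N
            (Nat.le_floor (by exact_mod_cast hlevels)) (by simpa using hc) ENNReal.ofReal_ne_top)
    _ = 14400 * K * ENNReal.ofReal (((q * (N + q) : ℕ) : ℝ) / c ^ 4) := by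
        rw [ENNReal.ofReal_div_of_pos (pow_pos hc 4), ENNReal.ofReal_natCast,
          ENNReal.ofReal_pow hc.le, mul_div_assoc]
    _ ≤ _ := by gcongr

lemma ProductDecorrelation.exists_eventually_measure_le_smoothDist_le [IsFiniteMeasure μ]
    {ρ : ℕ → ℝ} (hρ : ProductDecorrelation μ X ρ) (hs : Summable fun n : ℕ => (n : ℝ) * ρ n)
    (hXmeas : ∀ n, Measurable (X n)) {L : ℝ} (hbdd : ∀ n x, |X n x| ≤ L)
    (hcent : ∀ n, ∫ x, X n x ∂μ = 0) {MN : ℕ → ℕ} (hMN1 : ∀ N, 1 ≤ MN N)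
    (hMNo : Tendsto (fun N : ℕ => (MN N : ℝ) / Bvar μ X N) atTop (𝓝 0))
    (hBpos : ∀ᶠ N in atTop, 0 < Bvar μ X N) (hC : 0 < C)
    (hgap : ∀ᶠ N in atTop, ∀ u v : ℕ, u < v → v < N → MN N ≤ v - u →
      C * MN N ≤ Bpart μ X N v - Bpart μ X N u) (hlam : 0 < lam) :
    ∃ A : ℝ, 0 < A ∧ ∀ᶠ N in atTop, ∀ ε : ℝ, ε ≤ 1 → MN N ≤ ε * Bvar μ X N →
      μ {x | lam ≤ smoothDist μ X N ε x} ≤ ENNReal.ofReal (A * ε) := by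
  have hmom := lintegral_enorm_sum_pow_four_le hXmeas hbdd hcent hρ hs
  set K := 24 * (rateMass ρ ^ 2 + 3 * rateMass ρ)
  have hK : 0 ≤ K := by
    have := rateMass_nonneg hρ.rate_nonneg
    positivity
  set D := 256 / lam ^ 4 * (2 + 2 / C) * (2 + 6 / C)
  refine ⟨14400 * (K + 1) * D, by positivity, ?_⟩
  filter_upwards [hBpos, hgap, hρ.eventually_mul_le_Bvar hcent hs hMNo hBpos hMN1 hC hgap]
    with N hB hgapN hNB ε hε hMε
  have hε0 : 0 ≤ ε := (pos_of_mul_pos_left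
    (lt_of_lt_of_le (by exact_mod_cast hMN1 N) hMε) hB.le).le
  calc _ ≤ 14400 * ENNReal.ofReal K * ENNReal.ofReal (D * ε) :=
        measure_le_smoothDist_le hXmeas hmom (hMN1 N) hC hgapN hB hNB hε hMε hlam
    _ = ENNReal.ofReal (14400 * K * D * ε) := by
        rw [← ENNReal.ofReal_ofNat, ← ENNReal.ofReal_mul (by positivity),
          ← ENNReal.ofReal_mul (by positivity), ← mul_assoc]
    _ ≤ _ := by gcongr; linarith

end SmoothingBound

lemma limsup_limsup_eq_zero_of_eventually_le {α : Type*} {l : Filter α} {f : ℝ → α → ℝ≥0∞}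
    {A : ℝ} (hf : ∀ ε, 0 < ε → ε ≤ 1 → ∀ᶠ N in l, f ε N ≤ ENNReal.ofReal (A * ε)) :
    limsup (fun ε => limsup (f ε) l) (𝓝[>] 0) = 0 := by
  have hlim : Tendsto (fun ε : ℝ => ENNReal.ofReal (A * ε)) (𝓝[>] 0) (𝓝 0) := by
    have hcont : Continuous fun ε : ℝ => ENNReal.ofReal (A * ε) :=
      ENNReal.continuous_ofReal.comp (continuous_const_mul A)
    exact (hcont.tendsto' 0 0 (by simp)).mono_left nhdsWithin_le_nhds
  refine (tendsto_of_tendsto_of_tendsto_of_le_of_le' tendsto_const_nhds hlim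
    (Eventually.of_forall fun _ => zero_le) ?_).limsup_eq
  filter_upwards [Ioc_mem_nhdsGT one_pos] with ε hε
  exact limsup_le_of_le (by isBoundedDefault) (hf ε hε.1 hε.2)

lemma le_mul_of_inv_floor_div_lt {m B ε : ℝ} (hm : 0 < m) (hmB : m ≤ B)
    (hε : (⌊B / m⌋₊ : ℝ)⁻¹ < ε) : m ≤ ε * B := by
  have hfloor : (1 : ℝ) ≤ ⌊B / m⌋₊ := by
    exact_mod_cast Nat.le_floor (by rwa [Nat.cast_one, one_le_div hm])
  have hinv : (B / m)⁻¹ ≤ (⌊B / m⌋₊ : ℝ)⁻¹ :=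
    inv_anti₀ (by linarith) (Nat.floor_le (div_nonneg (hm.le.trans hmB) hm.le))
  rw [← div_le_iff₀ (hm.trans_le hmB), ← inv_div]
  exact hinv.trans hε.le

theorem smoothing_estimate_general
    {M : Type*} [MeasurableSpace M] (μ : Measure M) [IsProbabilityMeasure μ]
    (X : ℕ → M → ℝ) (hXmeas : ∀ n, Measurable (X n))
    (L : ℝ) (hbdd : ∀ n, ∀ x, |X n x| ≤ L) (hcent : ∀ n, ∫ x, X n x ∂μ = 0)
    (Cs : ℝ) (R : ℕ → ℝ) (hfcb : ∀ N : ℕ, FCB μ X N L Cs R)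
    (hR1 : Summable fun n : ℕ => (n : ℝ) * R n)
    (N₀ : ℕ) (MN : ℕ → ℕ) (hMN1 : ∀ N, 1 ≤ MN N)
    (hMNo : Tendsto (fun N : ℕ => (MN N : ℝ) / Bvar μ X N) atTop (𝓝 0))
    (hBpos : ∀ N, N₀ ≤ N → 0 < Bvar μ X N)
    (C₁gap : ℝ) (hC₁ : 0 < C₁gap)
    (hgap : ∀ N, N₀ ≤ N → ∀ u v : ℕ, u < v → v < N → MN N ≤ v - u →
      C₁gap * (MN N : ℝ) ≤ Bpart μ X N v - Bpart μ X N u) :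
    (∀ lam : ℝ, 0 < lam →
      ∃ Clam : ℝ, 0 < Clam ∧ ∃ N₁ : ℕ, ∀ N, N₁ ≤ N → ∀ ε : ℝ,
        ((Nat.floor (Bvar μ X N / MN N) : ℝ))⁻¹ < ε → ε < 1 →
        μ {x | lam ≤ smoothDist μ X N ε x}
          ≤ ENNReal.ofReal (Clam * ((MN N : ℝ) / Bvar μ X N + ε))) ∧
    (∀ lam : ℝ, 0 < lam →
      limsup (fun ε : ℝ => limsup (fun N : ℕ => μ {x | lam ≤ smoothDist μ X N ε x}) atTop)
        (𝓝[>] 0) = 0) := by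
  have hBpos' : ∀ᶠ N in atTop, 0 < Bvar μ X N := eventually_atTop.2 ⟨N₀, hBpos⟩
  have hMN_le {ε : ℝ} (hε : 0 < ε) : ∀ᶠ N in atTop, MN N ≤ ε * Bvar μ X N := by
    filter_upwards [hBpos', hMNo.eventually_le_const hε] with N hB hratio
    exact (div_le_iff₀ hB).1 hratio
  have hbound (lam : ℝ) (hlam : 0 < lam) :=
    (productDecorrelation_of_fcb hbdd hfcb).exists_eventually_measure_le_smoothDist_le
      (summable_mul_fcbRate L Cs hR1) hXmeas hbdd hcent hMN1 hMNo hBpos' hC₁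
      (eventually_atTop.2 ⟨N₀, hgap⟩) hlam
  refine ⟨fun lam hlam => ?_, fun lam hlam => ?_⟩ <;> obtain ⟨A, hA, hAbound⟩ := hbound lam hlam
  · refine ⟨A, hA, eventually_atTop.1 ?_⟩
    filter_upwards [hAbound, hBpos', hMN_le one_pos] with N hN hB hMB ε hKε hε
    rw [one_mul] at hMB
    refine (hN ε hε.le (le_mul_of_inv_floor_div_lt (by exact_mod_cast hMN1 N) hMB hKε)).trans ?_
    gcongr
    exact le_add_of_nonneg_left (by positivity)
  · refine limsup_limsup_eq_zero_of_eventually_le (A := A) fun ε hε hε1 => ?_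
    filter_upwards [hAbound, hMN_le hε] with N hN hMN
    exact hN ε hε1 hMN

/-- equation (2.14) in the proof of Proposition 2.7: under (i) the functional
correlation bound with nonincreasing rate `R`, `∑ n R(n) < ∞`, `∑ √R(n) < ∞`; (ii)
`B_N⁻¹ = o(N^{−2/3})`; and (iii) the variance growth condition with `M_N = o(B_N)`, for every
`λ > 0` there is `C_λ > 0` such that for all large `N` and all `ε ∈ (1/K_N, 1)`,
`μ(‖(W_N)_ε − W_N‖_∞ ≥ λ) ≤ C_λ (M_N/B_N + ε)` with `K_N = ⌊B_N/M_N⌋`; in particular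
`limsup_{ε→0} limsup_{N→∞} μ(‖(W_N)_ε − W_N‖_∞ ≥ λ) = 0`. -/
theorem smoothing_estimate
    {M : Type} [MeasurableSpace M] (μ : Measure M) [IsProbabilityMeasure μ]
    (X : ℕ → M → ℝ) (hXmeas : ∀ n, Measurable (X n))
    (L : ℝ) (hL : 0 ≤ L) (hbdd : ∀ n, ∀ x, |X n x| ≤ L) (hcent : ∀ n, ∫ x, X n x ∂μ = 0)
    (Cs : ℝ) (hCs : 0 ≤ Cs) (R : ℕ → ℝ) (hRpos : ∀ n, 0 ≤ R n) (hRanti : Antitone R)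
    (hfcb : ∀ N : ℕ, FCB μ X N L Cs R)
    (hR1 : Summable fun n : ℕ => (n : ℝ) * R n)
    (hR2 : Summable fun n : ℕ => Real.sqrt (R n))
    (hBN : Filter.Tendsto (fun N : ℕ => ((N : ℝ)) ^ ((2:ℝ)/3) / Bvar μ X N)
      Filter.atTop (nhds 0))
    (N₀ : ℕ) (MN : ℕ → ℕ) (hMN1 : ∀ N, 1 ≤ MN N)
    (hMNo : Filter.Tendsto (fun N : ℕ => (MN N : ℝ) / Bvar μ X N) Filter.atTop (nhds 0))
    (hBpos : ∀ N, N₀ ≤ N → 0 < Bvar μ X N)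
    (C₁gap : ℝ) (hC₁ : 0 < C₁gap)
    (hgap : ∀ N, N₀ ≤ N → ∀ u v : ℕ, u < v → v < N → MN N ≤ v - u →
      C₁gap * (MN N : ℝ) ≤ Bpart μ X N v - Bpart μ X N u) :
    (∀ lam : ℝ, 0 < lam →
      ∃ Clam : ℝ, 0 < Clam ∧ ∃ N₁ : ℕ,
        ∀ N, N₁ ≤ N → ∀ ε : ℝ,
          ((Nat.floor (Bvar μ X N / MN N) : ℝ))⁻¹ < ε → ε < 1 →
          μ {x | lam ≤ smoothDist μ X N ε x}
            ≤ ENNReal.ofReal (Clam * ((MN N : ℝ) / Bvar μ X N + ε))) ∧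
    (∀ lam : ℝ, 0 < lam →
      Filter.limsup
        (fun ε : ℝ => Filter.limsup (fun N : ℕ => μ {x | lam ≤ smoothDist μ X N ε x})
          Filter.atTop)
        (nhdsWithin 0 (Set.Ioi 0)) = 0) :=
  smoothing_estimate_general μ X hXmeas L hbdd hcent Cs R hfcb hR1 N₀ MN hMN1 hMNo hBpos C₁gap hC₁
    hgap

end
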